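/- arXiv:1309.5618 — 2 statements merged into one kernel-verified Lean document; each statement's English description precedes it below -/
import Mathlib

section
/- Let T be a string of length n and 1 ≤ i < j ≤ n. Let p ∈ [i, j] be the position such that T[p..] is the lexicographically minimal element of Suf[i, j], and let α = α(i, j). Then the minimal suffix of T[i..j] is either T[p..j] or the minimal suffix of the canonical substring S_j^α. -/
/-!
Let `s` be the minimal suffix of `T[i..j]` and suppose `s ≠ t = T[p..j]`. Then `s ≺ t`, while
appending `r = T[j+1..]` gives `t·r ⪯ s·r`. Appending a string to both sides can change the order
only if the smaller string is a prefix of the larger one, so `s` is both a prefix and a suffix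
of `t`. If these two occurrences overlapped, the overlap would be a nonempty proper prefix of `s`
and a suffix of `T[i..j]`, contradicting minimality; hence `2|s| ≤ |t|`. Since consecutive
canonical lengths at most double, the canonical substring covers at least half of `T[i..j]`, so it
contains `s` as a suffix.
-/

variable {α : Type*} [LinearOrder α]

/-- `substr T i j` is the 1-indexed substring `T[i..j]` (inclusive). -/
def substr (T : List α) (i j : ℕ) : List α := (T.drop (i - 1)).take (j - i + 1)

/-- `sufFrom T i` is the 1-indexed suffix `T[i..]`. -/
def sufFrom (T : List α) (i : ℕ) : List α := T.drop (i - 1)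

/-- `s` is the lexicographically minimal nonempty suffix of `w`. -/
def IsMinSuffix (w s : List α) : Prop :=
  s ≠ [] ∧ s <:+ w ∧ ∀ t, t ≠ [] → t <:+ w → ¬ List.Lex (· < ·) t s

/-- `Len ℓ j`: for `ℓ = 1` it is `1`; for `ℓ ≥ 2`, with `m = ⌊ℓ/2⌋ - 1`, it is
`2·2^m + (j mod 2^m)` if `ℓ` is even and `3·2^m + (j mod 2^m)` if `ℓ` is odd.
The canonical substring `S_j^ℓ` is the suffix of `T[1..j]` of length `Len ℓ j`,
i.e. `substr T (j - Len ℓ j + 1) j`. -/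
def Len (ℓ j : ℕ) : ℕ :=
  if ℓ = 1 then 1
  else if ℓ % 2 = 0 then 2 * 2 ^ (ℓ / 2 - 1) + j % 2 ^ (ℓ / 2 - 1)
  else 3 * 2 ^ (ℓ / 2 - 1) + j % 2 ^ (ℓ / 2 - 1)

section Borders

variable {β : Type*} {s t : List β}

/-- `b` is a border of `w`: a nonempty string other than `w` itself that is both a prefix and a
suffix of `w`. The two occurrences of `b` in `w` may overlap. A minimal suffix has no border, which
bounds its length in any string it borders. -/
structure IsBorder (b w : List β) : Prop where
  ne_nil : b ≠ []
  ne_self : b ≠ w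
  isPrefix : b <+: w
  isSuffix : b <:+ w

theorem IsBorder.exists_isBorder_of_length_lt (h : IsBorder s t)
    (hlen : t.length < 2 * s.length) : ∃ b, IsBorder b s := by
  obtain ⟨u, hu⟩ := h.isPrefix
  obtain ⟨v, hv⟩ := h.isSuffix
  have hut : s.length + u.length = t.length := by rw [← hu, List.length_append]
  have hvt : v.length + s.length = t.length := by rw [← hv, List.length_append]
  have hu_ne : u ≠ [] := by
    rintro rfl
    exact h.ne_self (by simpa using hu)
  -- `b` is the overlap of the prefix and suffix occurrences of `s` in `t`.
  obtain ⟨b, hvb⟩ : v <+: s := List.prefix_of_prefix_length_le ⟨s, hv⟩ h.isPrefix (by omega)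
  have hbu : b ++ u = s := by
    apply List.append_cancel_left (as := v)
    rw [← List.append_assoc, hvb, hu, hv]
  refine ⟨b, ?_, ?_, ⟨u, hbu⟩, ⟨v, hvb⟩⟩
  · rintro rfl
    have : u.length = s.length := congrArg List.length hbu
    omega
  · rintro rfl
    exact hu_ne (by simpa using hbu)

end Borders

theorem lex_append_of_not_isPrefix {β : Type*} {R : β → β → Prop} {s t : List β}
    (h : List.Lex R s t) (hst : ¬ s <+: t) (r r' : List β) :
    List.Lex R (s ++ r) (t ++ r') := by
  induction h with
  | nil => exact absurd List.nil_prefix hst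
  | cons _ ih => exact .cons (ih fun hp => hst ((List.prefix_cons_inj _).2 hp))
  | rel hab => exact .rel hab

theorem IsBorder.lt {b w : List α} (h : IsBorder b w) : b < w :=
  lt_of_le_of_ne (not_lt.1 h.isPrefix.le) h.ne_self

namespace IsMinSuffix

variable {w v s t : List α}

theorem le (hs : IsMinSuffix w s) (ht₀ : t ≠ []) (ht : t <:+ w) : s ≤ t :=
  not_lt.1 (hs.2.2 t ht₀ ht)

theorem of_isSuffix (hs : IsMinSuffix w s) (hsv : s <:+ v) (hvw : v <:+ w) : IsMinSuffix v s :=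
  ⟨hs.1, hsv, fun t ht₀ ht => hs.2.2 t ht₀ (ht.trans hvw)⟩

theorem not_isBorder (hs : IsMinSuffix w s) (b : List α) : ¬ IsBorder b s := fun hb =>
  hs.2.2 b hb.ne_nil (hb.isSuffix.trans hs.2.1) hb.lt

theorem isBorder_of_append_le (hs : IsMinSuffix w s) (ht₀ : t ≠ []) (ht : t <:+ w) (hst : s ≠ t)
    {r r' : List α} (hle : t ++ r' ≤ s ++ r) : IsBorder s t := by
  have hlt : s < t := (hs.le ht₀ ht).lt_of_ne hst
  have hpre : s <+: t := by
    by_contra hpre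
    exact hle.not_gt (lex_append_of_not_isPrefix hlt hpre r r')
  exact ⟨hs.1, hst, hpre, List.suffix_of_suffix_length_le hs.2.1 ht hpre.length_le⟩

theorem eq_or_two_mul_length_le (hs : IsMinSuffix w s) (ht₀ : t ≠ []) (ht : t <:+ w)
    {r r' : List α} (hle : t ++ r' ≤ s ++ r) : s = t ∨ 2 * s.length ≤ t.length := by
  refine or_iff_not_imp_left.2 fun hst => ?_
  by_contra! hlen
  obtain ⟨b, hb⟩ := (hs.isBorder_of_append_le ht₀ ht hst hle).exists_isBorder_of_length_lt hlen
  exact hs.not_isBorder b hb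

theorem eq_or_of_length_le_two_mul (hs : IsMinSuffix w s) (ht₀ : t ≠ []) (ht : t <:+ w)
    {r r' : List α} (hle : t ++ r' ≤ s ++ r) (hv : v <:+ w) (hlen : t.length ≤ 2 * v.length) :
    s = t ∨ IsMinSuffix v s := by
  refine (hs.eq_or_two_mul_length_le ht₀ ht hle).imp_right fun hst => ?_
  have hsv : s.length ≤ v.length := by omega
  exact hs.of_isSuffix (List.suffix_of_suffix_length_le hs.2.1 hv hsv) hv

end IsMinSuffix

section Substrings

variable {β : Type*} (T : List β) {i j q : ℕ}

theorem substr_eq_drop_take (hi : 1 ≤ i) (hij : i ≤ j) :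
    substr T i j = (T.take j).drop (i - 1) := by
  rw [substr, List.take_drop]
  congr 2
  omega

theorem length_substr (hi : 1 ≤ i) (hij : i ≤ j) (hj : j ≤ T.length) :
    (substr T i j).length = j - i + 1 := by
  rw [substr_eq_drop_take T hi hij, List.length_drop, List.length_take_of_le hj]
  omega

theorem substr_append_drop (hi : 1 ≤ i) (hij : i ≤ j) :
    substr T i j ++ T.drop j = sufFrom T i := by
  have hj : j = i - 1 + (j - i + 1) := by omega
  conv_lhs => enter [2]; rw [hj, ← List.drop_drop]
  exact List.take_append_drop _ _

theorem substr_isSuffix_substr (hi : 1 ≤ i) (hiq : i ≤ q) (hqj : q ≤ j) :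
    substr T q j <:+ substr T i j := by
  rw [substr_eq_drop_take T hi (hiq.trans hqj), substr_eq_drop_take T (hi.trans hiq) hqj]
  exact List.drop_suffix_drop_left _ (Nat.sub_le_sub_right hiq 1)

variable {T} in
theorem exists_eq_substr_of_isSuffix {s : List β} (hi : 1 ≤ i) (hij : i ≤ j) (hs₀ : s ≠ [])
    (hs : s <:+ substr T i j) : ∃ q, i ≤ q ∧ q ≤ j ∧ s = substr T q j := by
  obtain ⟨k, hk⟩ : ∃ k, s = (substr T i j).drop k := ⟨_, List.suffix_iff_eq_drop.1 hs⟩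
  have hdrop : s = (T.take j).drop (i + k - 1) := by
    rw [hk, substr_eq_drop_take T hi hij, List.drop_drop, Nat.sub_add_comm hi]
  have hkj : i + k ≤ j := by
    have hpos := List.length_pos_iff.2 hs₀
    rw [hdrop, List.length_drop, List.length_take] at hpos
    omega
  exact ⟨i + k, Nat.le_add_right i k, hkj, by
    rw [hdrop, substr_eq_drop_take T (by omega) hkj]⟩

end Substrings

theorem Len_one (j : ℕ) : Len 1 j = 1 := rfl

theorem Len_two_mul_add_two (m j : ℕ) : Len (2 * m + 2) j = 2 * 2 ^ m + j % 2 ^ m := by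
  have hm : (2 * m + 2) / 2 - 1 = m := by omega
  rw [Len, if_neg (by omega), if_pos (by omega), hm]

theorem Len_two_mul_add_three (m j : ℕ) : Len (2 * m + 3) j = 3 * 2 ^ m + j % 2 ^ m := by
  have hm : (2 * m + 3) / 2 - 1 = m := by omega
  rw [Len, if_neg (by omega), if_neg (by omega), hm]

theorem Len_pos (ℓ j : ℕ) : 0 < Len ℓ j := by
  unfold Len
  split_ifs <;> positivity

theorem Len_succ_le_two_mul {ℓ : ℕ} (hℓ : 1 ≤ ℓ) (j : ℕ) : Len (ℓ + 1) j ≤ 2 * Len ℓ j := by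
  obtain rfl | hℓ := hℓ.eq_or_lt
  · simp [Len_one, Len_two_mul_add_two 0, Nat.mod_one]
  obtain ⟨k, rfl⟩ := Nat.exists_eq_add_of_le' hℓ
  obtain ⟨m, rfl | rfl⟩ := k.even_or_odd'
  · rw [Len_two_mul_add_three, Len_two_mul_add_two]
    omega
  · change Len (2 * (m + 1) + 2) j ≤ 2 * Len (2 * m + 3) j
    rw [Len_two_mul_add_two, Len_two_mul_add_three]
    have hmod : j % 2 ^ (m + 1) < 2 ^ (m + 1) := Nat.mod_lt j (by positivity)
    rw [pow_succ] at hmod ⊢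
    omega

theorem le_two_mul_Len_of_forall_le {A j n : ℕ} (hA : 1 ≤ A)
    (hmax : ∀ ℓ, 1 ≤ ℓ → Len ℓ j < n → ℓ ≤ A) : n ≤ 2 * Len A j := by
  have hsucc : n ≤ Len (A + 1) j := not_lt.1 fun h =>
    A.not_succ_le_self (hmax (A + 1) (Nat.le_add_left 1 A) h)
  exact hsucc.trans (Len_succ_le_two_mul hA j)

/-- Let `T` be a string of length `n`, `1 ≤ i < j ≤ n`, let `p ∈ [i,j]` be the position of the
lexicographically minimal suffix in `Suf[i,j]`, and let `A = α(i,j)` (the largest `ℓ ≥ 1` with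
`Len(ℓ,j) < j - i + 1`).  Then the minimal suffix of `T[i..j]` is either `T[p..j]` or the
minimal suffix of the canonical substring `S_j^A`. -/
theorem stmt_2 (T : List α) (i j p A : ℕ)
    (hi : 1 ≤ i) (hij : i < j) (hj : j ≤ T.length)
    (hp1 : i ≤ p) (hp2 : p ≤ j)
    (hpmin : ∀ q, i ≤ q → q ≤ j → ¬ List.Lex (· < ·) (sufFrom T q) (sufFrom T p))
    (hA1 : 1 ≤ A) (hA2 : Len A j < j - i + 1)
    (hA3 : ∀ ℓ, 1 ≤ ℓ → Len ℓ j < j - i + 1 → ℓ ≤ A) :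
    ∀ s, IsMinSuffix (substr T i j) s →
      s = substr T p j ∨ IsMinSuffix (substr T (j - Len A j + 1) j) s := by
  intro s hs
  obtain ⟨q, hiq, hqj, rfl⟩ := exists_eq_substr_of_isSuffix hi hij.le hs.1 hs.2.1
  have hip : 1 ≤ p := hi.trans hp1
  have hLen : 0 < Len A j := Len_pos A j
  have ht₀ : substr T p j ≠ [] := by
    rw [← List.length_pos_iff, length_substr T hip hp2 hj]
    omega
  have hle : substr T p j ++ T.drop j ≤ substr T q j ++ T.drop j := by
    rw [substr_append_drop T hip hp2, substr_append_drop T (hi.trans hiq) hqj]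
    exact not_lt.1 (hpmin q hiq hqj)
  have hhalf : j - i + 1 ≤ 2 * Len A j := le_two_mul_Len_of_forall_le hA1 hA3
  refine hs.eq_or_of_length_le_two_mul ht₀ (substr_isSuffix_substr T hi hp1 hp2) hle
    (substr_isSuffix_substr T hi (by omega) (by omega)) ?_
  rw [length_substr T hip hp2 hj, length_substr T (by omega) (by omega) hj]
  omega
end

section
/- Let x be a nonempty string and y a string having x as a prefix. Let y' denote y with its first |x| letters removed. Then the largest integer α such that x^α is a prefix of y equals 1 + ⌊lcp(y, y') / |x|⌋. -/
variable {α : Type*} [LinearOrder α]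

/-- `lrep w a` is `w^a`, the concatenation of `a` copies of `w`. -/
def lrep (w : List α) (a : ℕ) : List α := (List.replicate a w).flatten

/-- `lcp u v` is the length of the longest common prefix of `u` and `v`. -/
def lcp : List α → List α → ℕ
  | a :: as, b :: bs => if a = b then lcp as bs + 1 else 0
  | _, _ => 0

/-!
Write `y = x ++ z`, so that `z` is the string `y'` of the statement. A prefix of `y` is also a
prefix of `z` exactly when its length is at most `lcp y z`. If `x^k` is a prefix of `z`, then
`x^(k+1)` is a prefix of `y`, and hence also of `z` as long as `(k+1) * |x| ≤ lcp y z`.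
By induction, `x^k` is a prefix of `z` exactly when `k * |x| ≤ lcp y z`.
-/

section Powers

variable {β : Type*} {x z : List β}

lemma lrep_succ (x : List β) (k : ℕ) : lrep x (k + 1) = x ++ lrep x k := by
  simp [lrep, List.replicate_succ]

lemma lrep_succ' (x : List β) (k : ℕ) : lrep x (k + 1) = lrep x k ++ x := by
  simp [lrep, List.replicate_succ']

lemma length_lrep (x : List β) (k : ℕ) : (lrep x k).length = k * x.length := by
  simp [lrep]

lemma lrep_succ_prefix_append_iff {k : ℕ} : lrep x (k + 1) <+: x ++ z ↔ lrep x k <+: z := by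
  rw [lrep_succ, List.prefix_append_right_inj]

lemma lrep_prefix_lrep_succ (x : List β) (k : ℕ) : lrep x k <+: lrep x (k + 1) :=
  ⟨x, (lrep_succ' x k).symm⟩

lemma lrep_prefix_append_of_prefix {k : ℕ} (h : lrep x k <+: z) : lrep x k <+: x ++ z :=
  (lrep_prefix_lrep_succ x k).trans (lrep_succ_prefix_append_iff.mpr h)

end Powers

lemma prefix_iff_length_le_lcp {p u v : List α} (h : p <+: u) :
    p <+: v ↔ p.length ≤ lcp u v := by
  induction p generalizing u v with
  | nil => simp
  | cons a p ih =>
    obtain _ | ⟨b, u⟩ := u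
    · simp at h
    obtain ⟨rfl, hpu⟩ := List.cons_prefix_cons.mp h
    obtain _ | ⟨c, v⟩ := v
    · simp [lcp]
    rw [List.cons_prefix_cons, ih hpu, lcp]
    split_ifs with hac <;> simp [hac]

lemma lrep_prefix_iff_mul_length_le_lcp {x z : List α} {k : ℕ} :
    lrep x k <+: z ↔ k * x.length ≤ lcp (x ++ z) z := by
  have prefix_iff_of_prefix {j : ℕ} (h : lrep x j <+: x ++ z) :
      lrep x j <+: z ↔ j * x.length ≤ lcp (x ++ z) z := by
    rw [prefix_iff_length_le_lcp h, length_lrep]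
  refine ⟨fun h ↦ (prefix_iff_of_prefix (lrep_prefix_append_of_prefix h)).mp h, fun hk ↦ ?_⟩
  induction k with
  | zero => simp [lrep]
  | succ k ih =>
    have hz : lrep x k <+: z := ih ((Nat.mul_le_mul_right _ k.le_succ).trans hk)
    exact (prefix_iff_of_prefix (lrep_succ_prefix_append_iff.mpr hz)).mpr hk

lemma isGreatest_lrep_prefix_append {x : List α} (hx : x ≠ []) (z : List α) :
    IsGreatest {k | lrep x k <+: x ++ z} (1 + lcp (x ++ z) z / x.length) := by
  have succ_prefix_iff (k : ℕ) :
      lrep x (k + 1) <+: x ++ z ↔ k ≤ lcp (x ++ z) z / x.length := by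
    rw [lrep_succ_prefix_append_iff, lrep_prefix_iff_mul_length_le_lcp,
      Nat.le_div_iff_mul_le (List.length_pos_iff.mpr hx)]
  rw [Nat.add_comm]
  refine ⟨(succ_prefix_iff _).mpr le_rfl, ?_⟩
  rintro (_ | k) hk
  · exact Nat.zero_le _
  · exact Nat.succ_le_succ ((succ_prefix_iff k).mp hk)

/-- Let `x` be nonempty, `x` a prefix of `y`, and let `y'` be `y` with its first `|x|` letters
removed.  Then the largest integer `A` such that `x^A` is a prefix of `y` equals
`1 + ⌊lcp(y, y') / |x|⌋`. -/
theorem stmt_15 (x y : List α) (A : ℕ)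
    (hx : x ≠ []) (hpre : x <+: y)
    (hA1 : lrep x A <+: y)
    (hA2 : ∀ β, lrep x β <+: y → β ≤ A) :
    A = 1 + lcp y (y.drop x.length) / x.length := by
  obtain ⟨z, rfl⟩ := hpre
  rw [List.drop_left]
  exact IsGreatest.unique ⟨hA1, hA2⟩ (isGreatest_lrep_prefix_append hx z)
end
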